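/- Every semi-universally flexible IP loop is a stepping-up loop: if Q is an SUF IP loop, then Q is alternative and flexible, and for all a, b, c ∈ Q, SA(a,b,c) implies SA(a,b,b·c). -/

import Mathlib

/-- A loop `(Q, ·, \, /, 1)`: `mul x y = x·y`, `ld x y = x\y`, `rd x y = x/y`. -/
structure LoopStr (Q : Type*) where
  mul : Q → Q → Q
  ld : Q → Q → Q
  rd : Q → Q → Q
  one : Q
  ld_mul : ∀ x y, ld x (mul x y) = y
  rd_mul : ∀ x y, rd (mul y x) x = y
  mul_ld : ∀ x y, mul x (ld x y) = y
  mul_rd : ∀ x y, mul (rd y x) x = y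
  one_mul : ∀ x, mul one x = x
  mul_one : ∀ x, mul x one = x

/-- `SA x y z`: every triple from `{x, x⁻¹, y, y⁻¹, z, z⁻¹}` associates. -/
def SA {Q : Type*} (L : LoopStr Q) (inv : Q → Q) (x y z : Q) : Prop :=
  ∀ u v w : Q,
    u ∈ ({x, inv x, y, inv y, z, inv z} : Set Q) →
    v ∈ ({x, inv x, y, inv y, z, inv z} : Set Q) →
    w ∈ ({x, inv x, y, inv y, z, inv z} : Set Q) →
    L.mul u (L.mul v w) = L.mul (L.mul u v) w

/-!
In an IP loop the left SUF law lets a factor slide: `x, y, x * z` associates if and only if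
`x, y, z` does, and, applying this to inverses, `x * z, y, z` associates if and only if `x, y, z`
does. Sliding turns the flexible law, which is the case `u = 1` of left SUF, into alternativity.
For `a, b, b * c` it either reduces a triple to one that is known to associate, or brings it to a
form in which left SUF, or its mirror image, moves the remaining factors.
-/

/-- A loop with the inverse property, presented without its divisions: they are recovered as
`x \ y = x⁻¹ * y` and `x / y = x * y⁻¹`. -/
class IPLoop (Q : Type*) extends MulOneClass Q, Inv Q where
  protected inv_mul_cancel_left : ∀ x y : Q, x⁻¹ * (x * y) = y
  protected mul_inv_cancel_right : ∀ x y : Q, x * y * y⁻¹ = x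

/-- An IP loop all of whose left principal isotopes `(x / u) * y` are flexible. In an IP loop
`x / u⁻¹ = x * u`, so the law is stated with `u⁻¹` in place of `u` to avoid the division. -/
class LeftSUFLoop (Q : Type*) extends IPLoop Q where
  left_suf : ∀ x u y : Q, x * u * (y * u * x) = x * u * y * u * x

/-- The ordered triple `x, y, z` associates. -/
abbrev AssocTriple {Q : Type*} [Mul Q] (x y z : Q) : Prop := x * (y * z) = x * y * z

/-- The elements `x, y, z` and their inverses, from which the triples of `SA x y z` are taken. -/
def signedLetters {Q : Type*} [Inv Q] (x y z : Q) : Set Q := {x, x⁻¹, y, y⁻¹, z, z⁻¹}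

/-- The condition `SA x y z`, in multiplicative notation. -/
def StronglyAssoc {Q : Type*} [Mul Q] [Inv Q] (x y z : Q) : Prop :=
  ∀ u v w : Q, u ∈ signedLetters x y z → v ∈ signedLetters x y z → w ∈ signedLetters x y z →
    AssocTriple u v w

namespace StronglyAssoc

variable {Q : Type*} [Mul Q] [InvolutiveInv Q] {a b c : Q}

theorem assoc (h : StronglyAssoc a b c) (u v w : Q)
    (hu : u ∈ signedLetters a b c := by simp [signedLetters])
    (hv : v ∈ signedLetters a b c := by simp [signedLetters])
    (hw : w ∈ signedLetters a b c := by simp [signedLetters]) : AssocTriple u v w :=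
  h u v w hu hv hw

theorem of_mem (h : StronglyAssoc a b c) (u v w : Q)
    (hu : u ∈ signedLetters a b c := by simp [signedLetters])
    (hv : v ∈ signedLetters a b c := by simp [signedLetters])
    (hw : w ∈ signedLetters a b c := by simp [signedLetters]) : StronglyAssoc u v w := by
  have inv_mem {p : Q} (hp : p ∈ signedLetters a b c) : p⁻¹ ∈ signedLetters a b c := by
    rcases hp with rfl | rfl | rfl | rfl | rfl | rfl <;> simp [signedLetters]
  have mem {p : Q} (hp : p ∈ signedLetters u v w) : p ∈ signedLetters a b c := by
    rcases hp with rfl | rfl | rfl | rfl | rfl | rfl <;> first | assumption | exact inv_mem ‹_›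
  exact fun _ _ _ hp hq hr ↦ h _ _ _ (mem hp) (mem hq) (mem hr)

end StronglyAssoc

namespace IPLoop

variable {Q : Type*} [IPLoop Q] {x y z : Q}

protected theorem inv_mul_cancel (x : Q) : x⁻¹ * x = 1 := by
  simpa using IPLoop.inv_mul_cancel_left x 1

instance : InvolutiveInv Q where
  inv_inv x := by
    simpa [IPLoop.inv_mul_cancel] using IPLoop.inv_mul_cancel_left x⁻¹ x

protected theorem mul_inv_cancel (x : Q) : x * x⁻¹ = 1 := by
  simpa using IPLoop.inv_mul_cancel x⁻¹

protected theorem mul_inv_cancel_left (x y : Q) : x * (x⁻¹ * y) = y := by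
  simpa using IPLoop.inv_mul_cancel_left x⁻¹ y

protected theorem inv_mul_cancel_right (x y : Q) : x * y⁻¹ * y = x := by
  simpa using IPLoop.mul_inv_cancel_right x y⁻¹

attribute [simp] IPLoop.inv_mul_cancel IPLoop.mul_inv_cancel
  IPLoop.inv_mul_cancel_left IPLoop.mul_inv_cancel_right
  IPLoop.mul_inv_cancel_left IPLoop.inv_mul_cancel_right

instance : IsCancelMul Q where
  mul_left_cancel x y z h := by simpa using congrArg (x⁻¹ * ·) h
  mul_right_cancel x y z h := by simpa using congrArg (· * x⁻¹) h

@[simp] protected theorem mul_inv_rev (x y : Q) : (x * y)⁻¹ = y⁻¹ * x⁻¹ := by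
  have h : (x * y)⁻¹ * x = y⁻¹ := by simpa using IPLoop.inv_mul_cancel_left (x * y) y⁻¹
  rw [← h, IPLoop.mul_inv_cancel_right]

theorem inv_mul_eq_inv_iff : x⁻¹ * y = z⁻¹ ↔ y * z = x := by
  constructor <;> intro h
  · rw [← inv_inv z, ← h, IPLoop.mul_inv_rev, inv_inv, IPLoop.mul_inv_cancel_left]
  · rw [← h, IPLoop.mul_inv_rev, IPLoop.inv_mul_cancel_right]

end IPLoop

namespace AssocTriple

variable {Q : Type*} [IPLoop Q] {x y z : Q}

theorem inv_rev (h : AssocTriple x y z) : AssocTriple z⁻¹ y⁻¹ x⁻¹ := by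
  simpa using (congrArg (·⁻¹) h).symm

theorem inv_rev_iff : AssocTriple z⁻¹ y⁻¹ x⁻¹ ↔ AssocTriple x y z :=
  ⟨fun h ↦ by simpa only [inv_inv] using h.inv_rev, inv_rev⟩

theorem inv_right (h : AssocTriple x y z) : AssocTriple x (y * z) z⁻¹ := by
  simp [AssocTriple, h]

end AssocTriple

namespace LeftSUFLoop

variable {Q : Type*} [LeftSUFLoop Q] {x y z : Q}

theorem right_suf (x v y : Q) : x * (v * (y * (v * x))) = x * (v * y) * (v * x) := by
  simpa using congrArg (·⁻¹) (left_suf x⁻¹ v⁻¹ y⁻¹).symm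

theorem assocTriple_mul_right_iff : AssocTriple x y (x * z) ↔ AssocTriple x y z := by
  have h := left_suf (x * z) z⁻¹ (y * z)
  simp only [IPLoop.mul_inv_cancel_right] at h
  rw [AssocTriple, AssocTriple, h, mul_left_inj, ← mul_left_inj z, IPLoop.inv_mul_cancel_right]

theorem assocTriple_inv_mul_right_iff : AssocTriple x y (x⁻¹ * z) ↔ AssocTriple x y z := by
  rw [← assocTriple_mul_right_iff, IPLoop.mul_inv_cancel_left]

theorem assocTriple_mul_left_iff : AssocTriple (x * z) y z ↔ AssocTriple x y z := by
  rw [← AssocTriple.inv_rev_iff, IPLoop.mul_inv_rev, assocTriple_mul_right_iff,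
    AssocTriple.inv_rev_iff]

theorem assocTriple_mul_inv_left_iff : AssocTriple (x * z⁻¹) y z ↔ AssocTriple x y z := by
  rw [← assocTriple_mul_left_iff, IPLoop.inv_mul_cancel_right]

theorem flexible (x y : Q) : AssocTriple x y x := by
  simpa using left_suf x 1 y

theorem assocTriple_conj (x y : Q) : AssocTriple x y x⁻¹ := by
  rw [← assocTriple_mul_right_iff, AssocTriple, IPLoop.mul_inv_cancel, mul_one, mul_one]

theorem assocTriple_right_mul (x y : Q) : AssocTriple x y (y * x) := by
  rw [← assocTriple_mul_inv_left_iff]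
  simp [AssocTriple]

theorem right_alternative (x y : Q) : AssocTriple x y y := by
  rw [← assocTriple_inv_mul_right_iff]
  calc x * (y * (x⁻¹ * y))
      = x * (y * x⁻¹ * (y * x⁻¹ * x)) := by rw [flexible y, IPLoop.inv_mul_cancel_right]
    _ = x * (y * x⁻¹) * (y * x⁻¹ * x) := assocTriple_right_mul _ _
    _ = x * y * x⁻¹ * y := by rw [assocTriple_conj x y, IPLoop.inv_mul_cancel_right]
    _ = x * y * x⁻¹ * (x⁻¹ * (x * y)) := by rw [IPLoop.inv_mul_cancel_left]
    _ = x * y * (x⁻¹ * (x⁻¹ * (x * y))) := (assocTriple_right_mul _ _).symm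
    _ = x * y * (x⁻¹ * y) := by rw [IPLoop.inv_mul_cancel_left]

theorem left_alternative (x y : Q) : AssocTriple x x y :=
  AssocTriple.inv_rev_iff.1 (right_alternative y⁻¹ x⁻¹)

theorem assocTriple_of_mem_left (h : x ∈ ({y, y⁻¹} : Set Q)) : AssocTriple x y z := by
  rcases h with rfl | rfl
  · exact left_alternative x z
  · simp [AssocTriple]

theorem assocTriple_of_mem_right (h : y ∈ ({z, z⁻¹} : Set Q)) : AssocTriple x y z := by
  rcases h with rfl | rfl
  · exact right_alternative x y
  · simp [AssocTriple]

theorem assocTriple_of_mem_outer (h : z ∈ ({x, x⁻¹} : Set Q)) : AssocTriple x y z := by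
  rcases h with rfl | rfl
  · exact flexible z y
  · exact assocTriple_conj x y

theorem stronglyAssoc_of_forall_mem
    (h : ∀ u ∈ ({x, x⁻¹} : Set Q), ∀ v ∈ ({y, y⁻¹} : Set Q), ∀ w ∈ ({z, z⁻¹} : Set Q),
      AssocTriple u v w ∧ AssocTriple v u w ∧ AssocTriple u w v) :
    StronglyAssoc x y z := by
  have inv_mem {s t : Q} (ht : t ∈ ({s, s⁻¹} : Set Q)) : t⁻¹ ∈ ({s, s⁻¹} : Set Q) := by
    rcases ht with rfl | rfl <;> simp
  have same {s t₁ t₂ : Q} (ht₁ : t₁ ∈ ({s, s⁻¹} : Set Q)) (ht₂ : t₂ ∈ ({s, s⁻¹} : Set Q)) :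
      t₁ ∈ ({t₂, t₂⁻¹} : Set Q) := by
    rcases ht₁ with rfl | rfl <;> rcases ht₂ with rfl | rfl <;> simp
  have split {t : Q} (ht : t ∈ signedLetters x y z) :
      t ∈ ({x, x⁻¹} : Set Q) ∨ t ∈ ({y, y⁻¹} : Set Q) ∨ t ∈ ({z, z⁻¹} : Set Q) := by
    simpa [signedLetters, or_assoc] using ht
  intro p q r hp hq hr
  rcases split hp with hp | hp | hp <;> rcases split hq with hq | hq | hq
  all_goals first
    | exact assocTriple_of_mem_left (same hp hq)
    | rcases split hr with hr | hr | hr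
  all_goals first
    | exact assocTriple_of_mem_right (same hq hr)
    | exact assocTriple_of_mem_outer (same hr hp)
    | skip
  · exact (h p hp q hq r hr).1
  · exact (h p hp r hr q hq).2.2
  · exact (h q hq p hp r hr).2.1
  · exact AssocTriple.inv_rev_iff.1 (h _ (inv_mem hr) _ (inv_mem hp) _ (inv_mem hq)).2.2
  · exact AssocTriple.inv_rev_iff.1 (h _ (inv_mem hq) _ (inv_mem hr) _ (inv_mem hp)).2.1
  · exact AssocTriple.inv_rev_iff.1 (h _ (inv_mem hr) _ (inv_mem hq) _ (inv_mem hp)).1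

end LeftSUFLoop

namespace StronglyAssoc

variable {Q : Type*} [LeftSUFLoop Q] {a b c : Q}

open LeftSUFLoop

-- In the names below a capital letter stands for the inverse of the letter: `assoc_a_B_cb` is about
-- the triple `a, b⁻¹, c * b`.

theorem assoc_b_a_bc (h : StronglyAssoc a b c) : AssocTriple b a (b * c) :=
  assocTriple_mul_right_iff.2 (h.assoc b a c)

theorem assoc_b_a_Bc (h : StronglyAssoc a b c) : AssocTriple b a (b⁻¹ * c) :=
  assocTriple_inv_mul_right_iff.2 (h.assoc b a c)

theorem assoc_cb_a_b (h : StronglyAssoc a b c) : AssocTriple (c * b) a b :=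
  assocTriple_mul_left_iff.2 (h.assoc c a b)

theorem assoc_cB_a_b (h : StronglyAssoc a b c) : AssocTriple (c * b⁻¹) a b :=
  assocTriple_mul_inv_left_iff.2 (h.assoc c a b)

theorem assoc_b_a_cb (h : StronglyAssoc a b c) : AssocTriple b a (c * b) := by
  rw [← assocTriple_mul_inv_left_iff]
  simpa using (h.of_mem a c⁻¹ b).assoc_b_a_Bc

theorem assoc_a_b_cb (h : StronglyAssoc a b c) : AssocTriple a b (c * b) := by
  rw [← assocTriple_inv_mul_right_iff]
  calc a * (b * (a⁻¹ * (c * b)))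
      = a * (b * a⁻¹ * (c * b)) := by rw [(h.of_mem a⁻¹ b c).assoc_b_a_cb]
    _ = a * (b * a⁻¹ * c) * b := by simpa using right_suf a (b * a⁻¹) c
    _ = a * b * (a⁻¹ * c) * b := by
      rw [← h.assoc b a⁻¹ c, (h.of_mem b a c).assoc_b_a_Bc]
    _ = a * b * (a⁻¹ * c * b) := by
      symm
      apply assocTriple_mul_left_iff.2
      simp [AssocTriple, ← h.assoc a⁻¹ c b]
    _ = a * b * (a⁻¹ * (c * b)) := by rw [h.assoc a⁻¹ c b]

theorem assoc_a_bc_b (h : StronglyAssoc a b c) : AssocTriple a (b * c) b := by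
  rw [AssocTriple, ← flexible b c, h.assoc_a_b_cb, (h.of_mem c b a).assoc_cb_a_b, h.assoc a b c]

theorem assoc_a_B_cb (h : StronglyAssoc a b c) : AssocTriple a b⁻¹ (c * b) := by
  have b_Bc_A : AssocTriple b (b⁻¹ * c) a⁻¹ := by simp [AssocTriple, ← h.assoc b⁻¹ c a⁻¹]
  have ba_Bc_A : AssocTriple (b * a) (b⁻¹ * c) a⁻¹ := by
    simpa using assocTriple_mul_inv_left_iff.2 b_Bc_A
  have ba_Bc_b : AssocTriple (b * a) (b⁻¹ * c) b := by
    rw [← assocTriple_inv_mul_right_iff]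
    simpa using ba_Bc_A
  have b_a_Bcb : AssocTriple b a (b⁻¹ * (c * b)) :=
    assocTriple_inv_mul_right_iff.2 h.assoc_b_a_cb
  rw [AssocTriple, ← mul_right_inj b, b_a_Bcb]
  calc b * a * (b⁻¹ * (c * b))
      = b * a * (b⁻¹ * c) * b := by rw [h.assoc b⁻¹ c b, ba_Bc_b]
    _ = b * (a * b⁻¹ * c) * b := by rw [← h.assoc_b_a_Bc, h.assoc a b⁻¹ c]
    _ = b * (a * b⁻¹ * c * b) := (flexible _ _).symm
    _ = b * (a * b⁻¹ * (c * b)) := by rw [(h.of_mem c b a).assoc_cB_a_b]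

theorem assoc_a_bc_B (h : StronglyAssoc a b c) : AssocTriple a (b * c) b⁻¹ := by
  have ab_c_B : AssocTriple (a * b) c b⁻¹ := by
    simpa using (h.of_mem c b⁻¹ a).assoc_cB_a_b
  have a_b_cB : AssocTriple a b (c * b⁻¹) := by
    simpa using (h.of_mem a b⁻¹ c).assoc_a_B_cb
  rw [AssocTriple, ← h.assoc b c b⁻¹, a_b_cB, ab_c_B, h.assoc a b c]

theorem assoc_b_a_cB (h : StronglyAssoc a b c) : AssocTriple b a (c * b⁻¹) := by
  have A_b_acB : AssocTriple a⁻¹ b (a * (c * b⁻¹)) := by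
    rw [← assocTriple_mul_right_iff]
    simpa using (h.of_mem a⁻¹ b⁻¹ c).assoc_a_B_cb
  have Ab_ac_B : AssocTriple (a⁻¹ * b) (a * c) b⁻¹ := by
    have : AssocTriple a⁻¹ (a * c) b⁻¹ := by simp [AssocTriple, ← h.assoc a c b⁻¹]
    simpa using assocTriple_mul_inv_left_iff.2 this
  have A_b_ac : AssocTriple a⁻¹ b (a * c) := by
    simpa using (h.of_mem b a⁻¹ c).assoc_b_a_Bc
  rw [AssocTriple, ← mul_right_inj a⁻¹, A_b_acB]
  calc a⁻¹ * b * (a * (c * b⁻¹))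
      = a⁻¹ * b * (a * c) * b⁻¹ := by rw [h.assoc a c b⁻¹, Ab_ac_B]
    _ = a⁻¹ * (b * a * c) * b⁻¹ := by rw [← A_b_ac, h.assoc b a c]
    _ = a⁻¹ * (b * a * (c * b⁻¹)) := by
      simpa using congrArg (· * b⁻¹) (right_suf a⁻¹ (b * a) (c * b⁻¹))

theorem assoc_a_b_Bc (h : StronglyAssoc a b c) : AssocTriple a b (b⁻¹ * c) := by
  have ca_b_A : AssocTriple (c * a) b a⁻¹ := by
    simpa using (h.of_mem b a⁻¹ c).assoc_cB_a_b
  have B_ca_bA : AssocTriple b⁻¹ (c * a) (b * a⁻¹) := by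
    have : AssocTriple b⁻¹ (c * a) a⁻¹ := by simp [AssocTriple, h.assoc b⁻¹ c a]
    simpa using assocTriple_inv_mul_right_iff.2 this
  have Bc_a_c : AssocTriple (b⁻¹ * c) a c := assocTriple_mul_left_iff.2 (h.assoc b⁻¹ a c)
  have mul_conj_eq : b⁻¹ * c * (a * b) * a⁻¹ = b⁻¹ * c * a * (b * a⁻¹) := by
    calc b⁻¹ * c * (a * b) * a⁻¹
        = b⁻¹ * (c * (a * b) * a⁻¹) := by
          simpa using congrArg (b⁻¹ * ·) (left_suf a⁻¹ (a * b) (b⁻¹ * c))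
      _ = b⁻¹ * (c * a * (b * a⁻¹)) := by rw [h.assoc c a b, ca_b_A]
      _ = b⁻¹ * c * a * (b * a⁻¹) := by rw [B_ca_bA, h.assoc b⁻¹ c a]
  rw [AssocTriple, ← mul_right_inj (b⁻¹ * c)]
  calc b⁻¹ * c * (a * (b * (b⁻¹ * c)))
      = b⁻¹ * c * a * (b * (b⁻¹ * c)) := by rw [IPLoop.mul_inv_cancel_left, Bc_a_c]
    _ = b⁻¹ * c * a * (b * a⁻¹) * a * (b⁻¹ * c) := by
      simpa using left_suf (b⁻¹ * c) a (b * a⁻¹)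
    _ = b⁻¹ * c * (a * b) * (b⁻¹ * c) := by rw [← mul_conj_eq, IPLoop.inv_mul_cancel_right]
    _ = b⁻¹ * c * (a * b * (b⁻¹ * c)) := (flexible _ _).symm

theorem assoc_ba_Ac_b (h : StronglyAssoc a b c) : AssocTriple (b * a) (a⁻¹ * c) b := by
  have B_CB_ba : AssocTriple b⁻¹ (c⁻¹ * b⁻¹) (b * a) := by
    have B_CB_a : AssocTriple b⁻¹ (c⁻¹ * b⁻¹) a := by
      simpa using (h.of_mem a⁻¹ b c).assoc_a_bc_b.inv_rev
    simpa using assocTriple_inv_mul_right_iff.2 B_CB_a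
  have C_B_ba : AssocTriple c⁻¹ b⁻¹ (b * a) := by
    simpa using (h.of_mem c⁻¹ b⁻¹ a).assoc_a_b_Bc
  have bcb_inv_mul : (b * c * b)⁻¹ * (b * a) = (a⁻¹ * c * b)⁻¹ := by
    simp only [IPLoop.mul_inv_rev, inv_inv]
    rw [← B_CB_ba, ← C_B_ba, IPLoop.inv_mul_cancel_left]
  rw [AssocTriple, IPLoop.inv_mul_eq_inv_iff.1 bcb_inv_mul,
    ← (h.of_mem b a c).assoc_a_b_Bc, IPLoop.mul_inv_cancel_left]

theorem assoc_a_b_bc (h : StronglyAssoc a b c) : AssocTriple a b (b * c) := by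
  have ba_Ac_A : AssocTriple (b * a) (a⁻¹ * c) a⁻¹ := by
    simpa using assocTriple_inv_mul_right_iff.2 h.assoc_ba_Ac_b
  have ba_mul_conj : b * a * (a⁻¹ * c * a⁻¹) = b * (c * a⁻¹) := by
    rw [ba_Ac_A, ← (h.of_mem b a c).assoc_a_b_Bc, IPLoop.mul_inv_cancel_left,
      h.assoc b c a⁻¹]
  have mul_ba : a * (c⁻¹ * b⁻¹) * (b * a) = a * (c⁻¹ * a) := by
    simpa [h.assoc a c⁻¹ b⁻¹] using IPLoop.inv_mul_eq_inv_iff.2 ba_mul_conj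
  have aCB_b_a : AssocTriple (a * (b * c)⁻¹) b a := by
    rw [AssocTriple, IPLoop.mul_inv_rev, mul_ba, h.assoc a c⁻¹ b⁻¹,
      IPLoop.inv_mul_cancel_right, h.assoc a c⁻¹ a]
  rw [← assocTriple_mul_inv_left_iff, ← assocTriple_mul_right_iff, IPLoop.inv_mul_cancel_right]
  exact aCB_b_a

theorem assoc_a_cb_b (h : StronglyAssoc a b c) : AssocTriple a (c * b) b := by
  have a_cb_AC : AssocTriple a (c * b) (a⁻¹ * c⁻¹) :=
    assocTriple_inv_mul_right_iff.2 (h.of_mem a c b).assoc_a_bc_B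
  have cb_A_C : AssocTriple (c * b) a⁻¹ c⁻¹ := by
    simpa using (h.of_mem a c b⁻¹).assoc_b_a_cB.inv_rev
  rw [← assocTriple_inv_mul_right_iff, AssocTriple, eq_comm]
  calc a * (c * b) * (a⁻¹ * b)
      = a * (c * b) * (a⁻¹ * (c⁻¹ * (c * b))) := by rw [IPLoop.inv_mul_cancel_left]
    _ = a * (c * b) * (a⁻¹ * c⁻¹) * (c * b) := by
      simpa using right_suf (a * (c * b)) a⁻¹ c⁻¹
    _ = a * (c * b * a⁻¹ * c⁻¹) * (c * b) := by rw [← a_cb_AC, cb_A_C]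
    _ = a * (c * b * a⁻¹ * (c⁻¹ * (c * b))) := by
      simpa using (right_suf a (c * b * a⁻¹) c⁻¹).symm
    _ = a * (c * b * (a⁻¹ * b)) := by
      rw [IPLoop.inv_mul_cancel_left, (h.of_mem a⁻¹ b c).assoc_cb_a_b]

theorem assoc_a_cb_B (h : StronglyAssoc a b c) : AssocTriple a (c * b) b⁻¹ :=
  (h.assoc a c b).inv_right

theorem mul_right (h : StronglyAssoc a b c) : StronglyAssoc a b (b * c) := by
  refine stronglyAssoc_of_forall_mem fun u hu v hv w hw ↦ ?_
  have hu : StronglyAssoc u b c := by rcases hu with rfl | rfl; exacts [h, h.of_mem a⁻¹ b c]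
  have hb := hu.of_mem u b⁻¹ c
  have hc := hu.of_mem u b c⁻¹
  have hbc := hu.of_mem u b⁻¹ c⁻¹
  simp only [Set.mem_insert_iff, Set.mem_singleton_iff, IPLoop.mul_inv_rev] at hv hw
  rcases hv with hv | hv <;> rcases hw with hw | hw <;> rw [hv, hw]
  · exact ⟨hu.assoc_a_b_bc, hu.assoc_b_a_bc, hu.assoc_a_bc_b⟩
  · exact ⟨by simpa using hbc.assoc_a_B_cb, hc.assoc_b_a_cB, by simpa using hbc.assoc_a_cb_B⟩
  · exact ⟨by simpa using hb.assoc_a_b_Bc, by simpa using hb.assoc_b_a_Bc, hu.assoc_a_bc_B⟩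
  · exact ⟨hbc.assoc_a_b_cb, hbc.assoc_b_a_cb, hbc.assoc_a_cb_b⟩

end StronglyAssoc

/-- The multiplicative notation for an IP loop satisfying the left SUF law. -/
abbrev LoopStr.toLeftSUFLoop {Q : Type*} (L : LoopStr Q) (inv : Q → Q)
    (lip : ∀ x y, L.mul (inv x) (L.mul x y) = y)
    (rip : ∀ x y, L.mul (L.mul y x) (inv x) = y)
    (lsuf : ∀ x y u,
      L.mul (L.rd x u) (L.mul (L.rd y u) x)
        = L.mul (L.rd (L.mul (L.rd x u) y) u) x) : LeftSUFLoop Q where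
  mul := L.mul
  one := L.one
  inv := inv
  one_mul := L.one_mul
  mul_one := L.mul_one
  inv_mul_cancel_left := lip
  mul_inv_cancel_right x y := rip y x
  left_suf x u y := by
    have rd_inv (p : Q) : L.rd p (inv u) = L.mul p u := by
      rw [← rip u p, L.rd_mul, rip]
    have h := lsuf x y (inv u)
    simp only [rd_inv] at h
    exact h

/-- Every SUF IP loop is a stepping-up loop. -/
theorem suf_ip_stepping_up {Q : Type*} (L : LoopStr Q) (inv : Q → Q)
    (lip : ∀ x y, L.mul (inv x) (L.mul x y) = y)
    (rip : ∀ x y, L.mul (L.mul y x) (inv x) = y)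
    (lsuf : ∀ x y u,
      L.mul (L.rd x u) (L.mul (L.rd y u) x)
        = L.mul (L.rd (L.mul (L.rd x u) y) u) x)
    (rsuf : ∀ x y v,
      L.mul x (L.ld v (L.mul y (L.ld v x)))
        = L.mul (L.mul x (L.ld v y)) (L.ld v x)) :
    (∀ x y, L.mul x (L.mul x y) = L.mul (L.mul x x) y)
    ∧ (∀ x y, L.mul (L.mul x y) y = L.mul x (L.mul y y))
    ∧ (∀ x y, L.mul x (L.mul y x) = L.mul (L.mul x y) x)
    ∧ (∀ a b c, SA L inv a b c → SA L inv a b (L.mul b c)) := by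
  let := L.toLeftSUFLoop inv lip rip lsuf
  exact ⟨LeftSUFLoop.left_alternative, fun x y ↦ (LeftSUFLoop.right_alternative x y).symm,
    LeftSUFLoop.flexible, fun _ _ _ ↦ StronglyAssoc.mul_right⟩
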